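/- arXiv:1401.5738 — 3 statements merged into one kernel-verified Lean document; each statement's English description precedes it below -/
import Mathlib

section
/- Let R be a commutative ring, let I be an ideal of R with I^n = 0 for some n ≥ 1, and let τ : R → R be a ring homomorphism such that f − τ(f) ∈ I for every f ∈ R. Regard Z := id − τ as an additive (ℤ-linear) endomorphism of R, and for f ∈ R let μ_f denote the additive endomorphism of R given by multiplication by f. Then for all f₁, …, f_n ∈ R, the n-fold iterated commutator [⋯[[Z, μ_{f₁}], μ_{f₂}], ⋯ , μ_{f_n}] (formed in the ring of additive endomorphisms of R) is the zero endomorphism. In other words, Z — and hence the automorphism τ — is a differential operator of order at most n − 1 in the Grothendieck sense. -/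
theorem foldl_aux {R : Type*} [CommRing R] (I : Ideal R) (τ : R →+* R)
    (hτ : ∀ f : R, f - τ f ∈ I) (l : List R) :
    ∀ (k : ℕ) (c : R) (D : R →ₗ[ℤ] R), c ∈ I ^ k → (∀ g, D g = c * τ g) →
      ∃ c' ∈ I ^ (k + l.length), ∀ g,
        (l.foldl (fun D a => ⁅D, LinearMap.mulLeft ℤ a⁆) D) g = c' * τ g := by
  induction l with
  | nil => intro k c D hc hD; exact ⟨c, by simpa using hc, by simpa using hD⟩
  | cons a l ih =>
    intro k c D hc hD
    obtain ⟨c', hc', h⟩ := ih (k + 1) (-(c * (a - τ a))) ⁅D, LinearMap.mulLeft ℤ a⁆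
      (by rw [pow_succ]; exact neg_mem (Ideal.mul_mem_mul hc (hτ a)))
      (by
        intro g
        simp only [Ring.lie_def, LinearMap.sub_apply, Module.End.mul_apply,
          LinearMap.mulLeft_apply, hD, map_mul]
        ring)
    refine ⟨c', ?_, by simpa using h⟩
    rw [List.length_cons, show k + (l.length + 1) = k + 1 + l.length by omega]
    exact hc'


/-- **Algebraic core of Lemma 1 (lem:subD).**
If `τ : R → R` is a ring homomorphism of a commutative ring `R` that is congruent to the
identity modulo an ideal `I` with `I ^ n = 0` (`n ≥ 1`), then `Z := id - τ`, viewed as a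
`ℤ`-linear endomorphism of `R`, is a differential operator of order at most `n - 1` in the
Grothendieck sense: every `n`-fold iterated commutator of `Z` with multiplication operators
vanishes. -/
theorem stmt_0 {R : Type*} [CommRing R] (I : Ideal R) (n : ℕ) (hn : 1 ≤ n)
    (hI : I ^ n = ⊥) (τ : R →+* R) (hτ : ∀ f : R, f - τ f ∈ I)
    (f : Fin n → R) :
    (List.ofFn f).foldl
      (fun D a => ⁅D, LinearMap.mulLeft ℤ a⁆)
      (LinearMap.id - τ.toAddMonoidHom.toIntLinearMap) = 0 := by
  obtain ⟨m, rfl⟩ : ∃ m, n = m + 1 := ⟨n - 1, by omega⟩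
  rw [List.ofFn_succ, List.foldl_cons]
  obtain ⟨c, hc, h⟩ := foldl_aux I τ hτ (List.ofFn fun i : Fin m => f i.succ) 1 (f 0 - τ (f 0))
    ⁅LinearMap.id - τ.toAddMonoidHom.toIntLinearMap, LinearMap.mulLeft ℤ (f 0)⁆
    (by simpa using hτ (f 0))
    (by
      intro g
      simp [Ring.lie_def, Module.End.mul_apply]
      ring)
  rw [List.length_ofFn, add_comm, hI, Ideal.mem_bot] at hc
  ext g
  rw [h g, hc]
  simp
end

section
/- Let A be a commutative ℂ-algebra that is finite-dimensional as a ℂ-vector space and is a local ring; A is then a complex Banach algebra in its unique Hausdorff topology as a finite-dimensional ℂ-space, and its maximal ideal consists of nilpotent elements. Let R > 0 and let f be a holomorphic (complex-differentiable) function on the punctured disk {z ∈ ℂ : 0 < |z| < R} with values in A, such that f(z) is a unit of A for every z in the punctured disk, and suppose there exists N ∈ ℕ such that the function z ↦ z^N·f(z) extends holomorphically across 0. Then there exists an integer n such that for every r with 0 < r < R, the circle integral ∮_{|z|=r} f′(z)·f(z)⁻¹ dz equals 2πi·n·1_A. In particular, the residue (2πi)⁻¹∮ df/f is an integer multiple of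 the identity of A. -/
open Metric Real

lemma aux_hom (A : Type*) [NormedCommRing A] [NormedAlgebra ℂ A]
    [FiniteDimensional ℂ A] [IsLocalRing A] :
    ∃ φ : A →ₐ[ℂ] ℂ, ∃ m : ℕ, ∀ a, φ a = 0 → a ^ m = 0 := by
  have : IsArtinianRing A := IsArtinianRing.of_finite ℂ A
  let k := IsLocalRing.ResidueField A
  have hfin : Module.Finite ℂ k :=
    Module.Finite.of_surjective (IsScalarTower.toAlgHom ℂ A k).toLinearMap
      IsLocalRing.residue_surjective
  have hb : Function.Bijective (algebraMap ℂ k) :=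
    IsAlgClosed.algebraMap_bijective_of_isIntegral
  let e : ℂ ≃ₐ[ℂ] k := AlgEquiv.ofBijective (Algebra.ofId ℂ k) hb
  obtain ⟨m, hm⟩ := IsArtinianRing.isNilpotent_jacobson_bot (R := A)
  refine ⟨e.symm.toAlgHom.comp (IsScalarTower.toAlgHom ℂ A k), m, fun a ha => ?_⟩
  have ha' : a ∈ IsLocalRing.maximalIdeal A := by
    rw [IsLocalRing.mem_maximalIdeal]
    intro hu
    exact (hu.map (e.symm.toAlgHom.comp (IsScalarTower.toAlgHom ℂ A k))).ne_zero ha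
  rw [IsLocalRing.jacobson_eq_maximalIdeal _ bot_ne_top] at hm
  have := Ideal.pow_mem_pow ha' m
  rw [hm] at this
  simpa using this

lemma aux_scalar (R : ℝ) (hR : 0 < R) (c : ℂ → ℂ)
    (hnz : ∀ z ∈ ball (0 : ℂ) R \ {0}, c z ≠ 0)
    (N : ℕ) (g : ℂ → ℂ) (hg : DifferentiableOn ℂ g (ball (0 : ℂ) R))
    (hgc : ∀ z ∈ ball (0 : ℂ) R \ {0}, g z = z ^ N * c z) :
    ∃ n : ℤ, ∃ h : ℂ → ℂ, DifferentiableOn ℂ h (ball (0 : ℂ) R) ∧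
      (∀ z ∈ ball (0 : ℂ) R, h z ≠ 0) ∧
      ∀ z ∈ ball (0 : ℂ) R \ {0}, c z = z ^ n * h z := by
  have h0 : (0 : ℂ) ∈ ball (0 : ℂ) R := by simpa using hR
  have hgnz : ∀ z ∈ ball (0 : ℂ) R \ {0}, g z ≠ 0 := fun z hz => by
    rw [hgc z hz]
    exact mul_ne_zero (pow_ne_zero _ hz.2) (hnz z hz)
  have han : AnalyticAt ℂ g 0 := hg.analyticAt (isOpen_ball.mem_nhds h0)
  have hne : ¬ ∀ᶠ z in nhds (0 : ℂ), g z = 0 := by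
    intro H
    have H1 : ∀ᶠ z in nhdsWithin (0 : ℂ) {0}ᶜ, g z = 0 := H.filter_mono nhdsWithin_le_nhds
    have H2 : ∀ᶠ z in nhdsWithin (0 : ℂ) {0}ᶜ, z ∈ ball (0 : ℂ) R :=
      nhdsWithin_le_nhds (isOpen_ball.mem_nhds h0)
    obtain ⟨z, ⟨hz1, hz2⟩, hz3⟩ := ((H1.and H2).and self_mem_nhdsWithin).exists
    exact hgnz z ⟨hz2, hz3⟩ hz1
  obtain ⟨k, u, hu, hu0, hgu⟩ := han.exists_eventuallyEq_pow_smul_nonzero_iff.2 hne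
  classical
  let h : ℂ → ℂ := fun z => if z = 0 then u 0 else (z ^ k)⁻¹ * g z
  have hh : ∀ z, z ≠ 0 → h z = (z ^ k)⁻¹ * g z := fun z hz => if_neg hz
  refine ⟨(k : ℤ) - N, h, ?_, ?_, ?_⟩
  · intro z hz
    apply DifferentiableAt.differentiableWithinAt
    by_cases hz0 : z = 0
    · subst hz0
      refine hu.differentiableAt.congr_of_eventuallyEq ?_
      filter_upwards [hgu] with w hw
      by_cases hw0 : w = 0
      · simp [h, hw0]
      · rw [hh w hw0, hw, sub_zero, smul_eq_mul, inv_mul_cancel_left₀ (pow_ne_zero _ hw0)]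
    · have : DifferentiableAt ℂ (fun z => (z ^ k)⁻¹ * g z) z :=
        ((differentiableAt_id.pow k).inv (pow_ne_zero _ hz0)).mul
          (hg.differentiableAt (isOpen_ball.mem_nhds hz))
      refine this.congr_of_eventuallyEq ?_
      filter_upwards [isOpen_ne.mem_nhds hz0] with w hw using hh w hw
  · intro z hz
    by_cases hz0 : z = 0
    · simpa [h, hz0] using hu0
    · rw [hh z hz0]
      exact mul_ne_zero (inv_ne_zero (pow_ne_zero _ hz0)) (hgnz z ⟨hz, hz0⟩)
  · intro z hz
    have hz0 : z ≠ 0 := hz.2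
    rw [hh z hz0, hgc z hz, zpow_sub₀ hz0, zpow_natCast, zpow_natCast]
    field_simp

lemma aux_log {A : Type*} [NormedCommRing A] [NormedAlgebra ℂ A] (m : ℕ)
    (w : ℂ → A) (w' : A) (z : ℂ) (hw : HasDerivAt w w' z) :
    HasDerivAt (fun z => ∑ k ∈ Finset.range m, (-((k : ℂ) + 1)⁻¹) • (1 - w z) ^ (k + 1))
      (w' * ∑ k ∈ Finset.range m, (1 - w z) ^ k) z := by
  rw [Finset.mul_sum]
  refine HasDerivAt.fun_sum fun k _ => ?_
  have := ((hw.const_sub 1).fun_pow (k + 1)).const_smul (-((k : ℂ) + 1)⁻¹)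
  refine this.congr_deriv ?_
  have hk : ((k : ℂ) + 1) ≠ 0 := by exact_mod_cast Nat.succ_ne_zero k
  have e : (((k + 1 : ℕ) : A)) = ((k : ℂ) + 1) • (1 : A) := by
    rw [← Algebra.algebraMap_eq_smul_one]; simp
  rw [e, Nat.add_sub_cancel, smul_mul_assoc, smul_mul_assoc, smul_smul, neg_mul,
    inv_mul_cancel₀ hk, neg_one_smul]
  ring

/-- **Lemma 7 (lem:integer): `∮_P df/f` is an integer.**
Let `A` be a commutative finite-dimensional local `ℂ`-algebra (a complex Banach algebra in
its unique Hausdorff topology; its maximal ideal consists of nilpotents).  If `f` is a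
holomorphic `A`-valued function on the punctured disk `{0 < |z| < R}`, taking unit values,
and `z ^ N • f z` extends holomorphically across `0` for some `N`, then there is an integer
`n` such that `∮_{|z|=r} f′(z) · f(z)⁻¹ dz = 2πi·n·1_A` for every `0 < r < R`. -/
theorem stmt_2 {A : Type*} [NormedCommRing A] [NormedAlgebra ℂ A]
    [FiniteDimensional ℂ A] [IsLocalRing A]
    (R : ℝ) (hR : 0 < R) (f : ℂ → A)
    (hf : DifferentiableOn ℂ f (ball (0 : ℂ) R \ {0}))
    (hunit : ∀ z ∈ ball (0 : ℂ) R \ {0}, IsUnit (f z))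
    (hext : ∃ N : ℕ, ∃ g : ℂ → A, DifferentiableOn ℂ g (ball (0 : ℂ) R) ∧
      ∀ z ∈ ball (0 : ℂ) R \ {0}, g z = z ^ N • f z) :
    ∃ n : ℤ, ∀ r : ℝ, 0 < r → r < R →
      (∮ z in C(0, r), deriv f z * Ring.inverse (f z)) =
        ((2 * π * Complex.I * n : ℂ) • (1 : A)) := by
  have : CompleteSpace A := FiniteDimensional.complete ℂ A
  obtain ⟨φ, m, hφ⟩ := aux_hom A
  obtain ⟨N, g, hg, hgf⟩ := hext
  let Φ : A →L[ℂ] ℂ := φ.toLinearMap.toContinuousLinearMap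
  have hΦ : ∀ a, Φ a = φ a := fun a => rfl
  set U : Set ℂ := ball (0 : ℂ) R \ {0} with hU
  have hUo : IsOpen U := isOpen_ball.sdiff isClosed_singleton
  let c : ℂ → ℂ := fun z => Φ (f z)
  have hc : DifferentiableOn ℂ c U := Φ.differentiable.comp_differentiableOn hf
  have hcnz : ∀ z ∈ U, c z ≠ 0 := fun z hz => ((hunit z hz).map φ).ne_zero
  obtain ⟨n, h, hh, hhnz, hch⟩ := aux_scalar R hR c hcnz N (fun z => Φ (g z))
    (Φ.differentiable.comp_differentiableOn hg) (fun z hz => by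
      change Φ (g z) = z ^ N * Φ (f z)
      rw [hgf z hz, map_smul, smul_eq_mul])
  let w : ℂ → A := fun z => (c z)⁻¹ • f z
  have hw : DifferentiableOn ℂ w U := (hc.inv hcnz).smul hf
  have hwn : ∀ z ∈ U, (1 - w z) ^ m = 0 := fun z hz => by
    apply hφ
    have : φ (w z) = 1 := by
      change φ ((c z)⁻¹ • f z) = 1
      rw [map_smul, smul_eq_mul]
      exact inv_mul_cancel₀ (hcnz z hz)
    rw [map_sub, map_one, this, sub_self]
  have hfw : ∀ z ∈ U, f z = c z • w z := fun z hz => by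
    change f z = c z • (c z)⁻¹ • f z
    rw [smul_inv_smul₀ (hcnz z hz)]
  let D : ℂ → A := fun z => deriv w z * ∑ k ∈ Finset.range m, (1 - w z) ^ k
  have hD : ContinuousOn D U := by
    have h1 : ContinuousOn (deriv w) U := (hw.deriv hUo).continuousOn
    have h2 : ContinuousOn w U := hw.continuousOn
    exact h1.mul (continuousOn_finsetSum _ fun k _ => (continuousOn_const.sub h2).pow k)
  have hDw : ∀ z ∈ U, D z * w z = deriv w z := fun z hz => by
    have := geom_sum_mul_neg (1 - w z) m
    rw [hwn z hz, sub_sub_cancel, sub_zero] at this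
    change deriv w z * _ * w z = _
    rw [mul_assoc, this, mul_one]
  have hlog : ∀ z ∈ U, deriv c z / c z = n * (z - 0)⁻¹ + deriv h z / h z := fun z hz => by
    have hz0 : z ≠ 0 := hz.2
    have he : c =ᶠ[nhds z] fun z => z ^ n * h z := by
      filter_upwards [hUo.mem_nhds hz] with y hy using hch y hy
    have hd := hh.differentiableAt (isOpen_ball.mem_nhds hz.1)
    have := logDeriv_mul (f := fun z : ℂ => z ^ n) (g := h) z (zpow_ne_zero _ hz0) (hhnz z hz.1)
      (differentiableAt_zpow.2 (Or.inl hz0)) hd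
    rw [logDeriv_zpow] at this
    rw [he.deriv_eq, he.eq_of_nhds, sub_zero, ← div_eq_mul_inv]
    simpa [logDeriv_apply] using this
  have key : ∀ z ∈ U, deriv f z * Ring.inverse (f z) =
      D z + (n * (z - 0)⁻¹ + deriv h z / h z) • (1 : A) := fun z hz => by
    rw [← hlog z hz]
    have he : f =ᶠ[nhds z] fun z => c z • w z := by
      filter_upwards [hUo.mem_nhds hz] with y hy using hfw y hy
    have hdc := (hc.differentiableAt (hUo.mem_nhds hz)).hasDerivAt
    have hdw := (hw.differentiableAt (hUo.mem_nhds hz)).hasDerivAt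
    have hdf : deriv f z = (D z + (deriv c z / c z) • (1 : A)) * f z := by
      rw [he.deriv_eq, (hdc.fun_smul hdw).deriv, hfw z hz, add_mul, mul_smul_comm, hDw z hz,
        smul_mul_smul_comm, one_mul, div_mul_cancel₀ _ (hcnz z hz)]
    rw [hdf, mul_assoc, Ring.mul_inverse_cancel _ (hunit z hz), mul_one]
  refine ⟨n, fun r hr hrR => ?_⟩
  have hsU : sphere (0 : ℂ) r ⊆ U := fun z hz => by
    have hz' : ‖z‖ = r := by simpa using hz
    refine ⟨by simpa [hz'] using hrR, ?_⟩
    rintro rfl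
    simp at hz'
    exact hr.ne hz'
  have hcb : closedBall (0 : ℂ) r ⊆ ball 0 R := closedBall_subset_ball hrR
  have hhd : DifferentiableOn ℂ (fun z => deriv h z / h z) (ball (0 : ℂ) R) :=
    (hh.deriv isOpen_ball).div hh hhnz
  have hI1 : (∮ z in C(0, r), D z) = 0 := by
    apply circleIntegral.integral_eq_zero_of_hasDerivWithinAt'
    intro z hz
    rw [abs_of_pos hr] at hz
    exact (aux_log m w _ z
      (hw.differentiableAt (hUo.mem_nhds (hsU hz))).hasDerivAt).hasDerivWithinAt
  have hI2 : (∮ z in C(0, r), deriv h z / h z) = 0 :=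
    Complex.circleIntegral_eq_zero_of_differentiable_on_off_countable hr.le
      Set.countable_empty (hhd.continuousOn.mono hcb)
      (fun z hz => hhd.differentiableAt (isOpen_ball.mem_nhds (hcb (ball_subset_closedBall hz.1))))
  have hc1 : ContinuousOn (fun z : ℂ => (n : ℂ) * (z - 0)⁻¹) (sphere 0 r) := by
    refine continuousOn_const.mul (ContinuousOn.inv₀ (by fun_prop) fun z hz => ?_)
    rw [sub_zero]
    exact (hsU hz).2
  have hc2 : ContinuousOn (fun z => deriv h z / h z) (sphere 0 r) :=
    hhd.continuousOn.mono (sphere_subset_closedBall.trans hcb)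
  have hc3 : ContinuousOn (fun z => (n * (z - 0)⁻¹ + deriv h z / h z) • (1 : A)) (sphere 0 r) :=
    (hc1.add hc2).smul continuousOn_const
  rw [circleIntegral.integral_congr hr.le (fun z hz => key z (hsU hz)),
    circleIntegral.integral_add ((hD.mono hsU).circleIntegrable hr.le)
      (hc3.circleIntegrable hr.le), hI1, zero_add, circleIntegral.integral_smul_const,
    circleIntegral.integral_add (hc1.circleIntegrable hr.le) (hc2.circleIntegrable hr.le), hI2,
    add_zero, circleIntegral.integral_const_mul, circleIntegral.integral_sub_center_inv _ hr.ne',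
    mul_comm]
end

section
/- Let A be a commutative ℂ-algebra that is finite-dimensional as a ℂ-vector space and is a local ring, with maximal ideal m; the composite ℂ → A → A/m is an isomorphism, and let ρ : A → ℂ denote the induced residue map. Let f and g be formal Laurent series with coefficients in A (elements of A((z)), i.e., Hahn series over ℤ with values in A) satisfying f·g = 1. Let Df denote the formal derivative of f, the Laurent series whose coefficient of z^m is (m+1) times the coefficient of z^{m+1} in f. Let f̄ ∈ ℂ((z)) be the Laurent series obtained by applying ρ to each coefficient of f; then f̄ ≠ 0, and the coefficient of z^{−1} in the product (Df)·g equals n·1_A, where n ∈ ℤ is the order of f̄ (the least exponent whose coefficient in f̄ is nonzero). -/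
open HahnSeries in
/-- The Euler operator `z d/dz` on Laurent series. -/
def eulerOp {A : Type*} [CommRing A] (x : LaurentSeries A) : LaurentSeries A where
  coeff m := m • x.coeff m
  isPWO_support' := x.isPWO_support.mono (by
    intro m hm h
    apply hm
    simp only [h, smul_zero])

theorem eulerOp_coeff {A : Type*} [CommRing A] (x : LaurentSeries A) (m : ℤ) :
    (eulerOp x).coeff m = m • x.coeff m := rfl

theorem eulerOp_support {A : Type*} [CommRing A] (x : LaurentSeries A) :
    (eulerOp x).support ⊆ x.support := by
  intro m hm h
  apply hm
  simp only [eulerOp_coeff, h, smul_zero]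

theorem eulerOp_mul {A : Type*} [CommRing A] (x y : LaurentSeries A) :
    eulerOp (x * y) = eulerOp x * y + x * eulerOp y := by
  ext m
  rw [eulerOp_coeff, HahnSeries.coeff_add,
    HahnSeries.coeff_mul_left' x.isPWO_support (eulerOp_support x),
    HahnSeries.coeff_mul_right' y.isPWO_support (eulerOp_support y), HahnSeries.coeff_mul,
    Finset.smul_sum, ← Finset.sum_add_distrib]
  refine Finset.sum_congr rfl ?_
  intro ij hij
  have h : ij.1 + ij.2 = m := by simpa using (Finset.mem_antidiagonal.1 hij).2.2
  simp only [eulerOp_coeff, ← h, zsmul_eq_mul]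
  push_cast
  ring

theorem eulerOp_pow {A : Type*} [CommRing A] (x : LaurentSeries A) (n : ℕ) :
    eulerOp (x ^ (n + 1)) = (n + 1) • (x ^ n * eulerOp x) := by
  induction n with
  | zero => simp
  | succ n ih =>
    rw [pow_succ, eulerOp_mul, ih]
    simp only [nsmul_eq_mul]
    push_cast
    ring

theorem coeff_zero_pow_mul_eulerOp {A : Type*} [CommRing A] [Algebra ℂ A]
    (x : LaurentSeries A) (n : ℕ) : (x ^ n * eulerOp x).coeff 0 = 0 := by
  have h := congrArg (fun y => HahnSeries.coeff y 0) (eulerOp_pow x n)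
  simp only [eulerOp_coeff, zero_smul, HahnSeries.coeff_nsmul, Pi.smul_apply] at h
  have h2 : ((n + 1 : ℕ) : ℂ) • (x ^ n * eulerOp x).coeff 0 = 0 := by
    rw [Nat.cast_smul_eq_nsmul]; exact h.symm
  have h3 : ((n + 1 : ℕ) : ℂ) ≠ 0 := by exact_mod_cast Nat.succ_ne_zero n
  have := congrArg (fun a => ((n + 1 : ℕ) : ℂ)⁻¹ • a) h2
  simpa only [smul_smul, inv_mul_cancel₀ h3, one_smul, smul_zero] using this

/-- Nilpotent perturbations of `1` have zero logarithmic residue. -/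
theorem logRes_nilp {A : Type*} [CommRing A] [Algebra ℂ A]
    (N : LaurentSeries A) (k : ℕ) (hN : N ^ k = 0) :
    ∃ w, (1 - N) * w = 1 ∧ (eulerOp (1 - N) * w).coeff 0 = 0 := by
  refine ⟨∑ i ∈ Finset.range k, N ^ i, ?_, ?_⟩
  · rw [mul_neg_geom_sum, hN, sub_zero]
  · have h : eulerOp (1 - N) = - eulerOp N := by
      ext m
      simp only [eulerOp_coeff, HahnSeries.coeff_sub, HahnSeries.coeff_neg,
        HahnSeries.coeff_one]
      split_ifs with hm <;> simp [hm]
    rw [h, neg_mul, HahnSeries.coeff_neg, Finset.mul_sum, HahnSeries.coeff_sum,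
      Finset.sum_eq_zero, neg_zero]
    intro i _
    rw [mul_comm]
    exact coeff_zero_pow_mul_eulerOp N i

theorem logRes_pow {A : Type*} [CommRing A] (x y : LaurentSeries A)
    (hx : ∀ m < 0, x.coeff m = 0) (hy : ∀ m < 0, y.coeff m = 0) :
    (eulerOp x * y).coeff 0 = 0 := by
  rw [HahnSeries.coeff_mul]
  refine Finset.sum_eq_zero ?_
  intro ij hij
  have h : ij.1 + ij.2 = 0 := by simpa using (Finset.mem_antidiagonal.1 hij).2.2
  rw [eulerOp_coeff]
  rcases lt_trichotomy ij.1 0 with h1 | h1 | h1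
  · rw [hx _ h1]; simp
  · rw [h1]; simp
  · rw [hy _ (by omega)]; simp

theorem coeff_mul_mem {A : Type*} [CommRing A] (I J : Ideal A) (x y : LaurentSeries A)
    (hx : ∀ m, x.coeff m ∈ I) (hy : ∀ m, y.coeff m ∈ J) (m : ℤ) :
    (x * y).coeff m ∈ I * J := by
  rw [HahnSeries.coeff_mul]
  exact Ideal.sum_mem _ fun ij _ => Ideal.mul_mem_mul (hx _) (hy _)

theorem coeff_pow_mem {A : Type*} [CommRing A] (I : Ideal A) (x : LaurentSeries A)
    (hx : ∀ m, x.coeff m ∈ I) (k : ℕ) : ∀ m, (x ^ k).coeff m ∈ I ^ k := by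
  induction k with
  | zero => intro m; simp
  | succ k ih => intro m; rw [pow_succ, pow_succ]; exact coeff_mul_mem _ _ _ _ ih hx m

theorem ofPS_coeff_neg {A : Type*} [CommRing A] (p : PowerSeries A) (m : ℤ) (hm : m < 0) :
    (HahnSeries.ofPowerSeries ℤ A p).coeff m = 0 := by
  have := PowerSeries.coeff_coe p m
  rwa [if_pos hm] at this

/-- **Formal Laurent-series version of Lemma 7 (lem:integer).**
Let `A` be a commutative finite-dimensional local `ℂ`-algebra with maximal ideal `m`, and
let `ρ : A → ℂ` be the residue map (the `ℂ`-algebra map with kernel `m`, induced by the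
isomorphism `ℂ ≅ A/m`).  Let `f, g ∈ A((z))` be formal Laurent series with `f * g = 1`,
let `Df` be the formal derivative of `f`, and let `f̄ ∈ ℂ((z))` be obtained by applying
`ρ` to each coefficient of `f`.  Then `f̄ ≠ 0` and the coefficient of `z⁻¹` in `(Df) * g`
equals `n • 1_A`, where `n` is the order of `f̄`. -/
theorem stmt_7 {A : Type*} [CommRing A] [Algebra ℂ A]
    [FiniteDimensional ℂ A] [IsLocalRing A]
    (ρ : A →ₐ[ℂ] ℂ) (hρ : RingHom.ker ρ.toRingHom = IsLocalRing.maximalIdeal A)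
    (f g : LaurentSeries A) (hfg : f * g = 1)
    (Df : LaurentSeries A)
    (hDf : ∀ m : ℤ, Df.coeff m = (m + 1) • f.coeff (m + 1))
    (fbar : LaurentSeries ℂ)
    (hfbar : ∀ m : ℤ, fbar.coeff m = ρ (f.coeff m)) :
    fbar ≠ 0 ∧ (Df * g).coeff (-1) = fbar.order • (1 : A) := by
  have hker : ∀ a, ρ a = 0 ↔ a ∈ IsLocalRing.maximalIdeal A := by
    intro a
    rw [← hρ]
    rfl
  have hne : fbar ≠ 0 := by
    intro h0
    have h1 : ∀ m, f.coeff m ∈ IsLocalRing.maximalIdeal A := by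
      intro m
      rw [← hker, ← hfbar, h0, HahnSeries.coeff_zero]
    have h2 := coeff_mul_mem _ ⊤ f g h1 (fun _ => Submodule.mem_top) 0
    rw [hfg, HahnSeries.coeff_one, if_pos rfl, Ideal.mul_top] at h2
    exact (Ideal.ne_top_iff_one _).1 (IsLocalRing.maximalIdeal.isMaximal A).ne_top h2
  refine ⟨hne, ?_⟩
  set n := fbar.order with hn
  -- reduce to the Euler operator
  have hD : Df = HahnSeries.single (-1) 1 * eulerOp f := by
    ext m
    rw [HahnSeries.coeff_single_mul, one_mul, eulerOp_coeff, hDf, sub_neg_eq_add]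
  have hred : (Df * g).coeff (-1) = (eulerOp f * g).coeff 0 := by
    rw [hD, mul_assoc, HahnSeries.coeff_single_mul, one_mul, sub_self]
  rw [hred]
  haveI : IsArtinianRing A := IsArtinianRing.of_finite ℂ A
  obtain ⟨k, hk⟩ : IsNilpotent (IsLocalRing.maximalIdeal A) := by
    have := IsArtinianRing.isNilpotent_jacobson_bot (R := A)
    rwa [IsLocalRing.jacobson_eq_maximalIdeal ⊥ bot_ne_top] at this
  -- the power series part
  let p : PowerSeries A := PowerSeries.mk fun i => f.coeff (n + i)
  have hp : IsUnit p := by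
    rw [PowerSeries.isUnit_iff_constantCoeff]
    have h1 : PowerSeries.constantCoeff p = f.coeff n := by
      rw [← PowerSeries.coeff_zero_eq_constantCoeff_apply, PowerSeries.coeff_mk]; simp
    rw [h1]
    by_contra h
    have h2 := (hker _).2 ((IsLocalRing.mem_maximalIdeal _).2 h)
    rw [← hfbar] at h2
    exact hne (HahnSeries.coeff_order_eq_zero.1 h2)
  obtain ⟨q, hpq⟩ := hp.exists_right_inv
  let P := HahnSeries.ofPowerSeries ℤ A p
  let Q := HahnSeries.ofPowerSeries ℤ A q
  have hPQ : P * Q = 1 := by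
    rw [← map_mul, hpq, map_one]
  let Z : LaurentSeries A := HahnSeries.single n 1
  let Y : LaurentSeries A := HahnSeries.single (-n) 1
  have hZY : Z * Y = 1 := by
    simp [Z, Y, HahnSeries.single_mul_single]
  let R : LaurentSeries A := P - Y * f
  have hR : ∀ m, R.coeff m ∈ IsLocalRing.maximalIdeal A := by
    intro m
    have h1 : R.coeff m = P.coeff m - f.coeff (m + n) := by
      simp only [R, Y, HahnSeries.coeff_sub, HahnSeries.coeff_single_mul, one_mul,
        sub_neg_eq_add]
    rw [h1]
    rcases lt_or_ge m 0 with hm | hm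
    · rw [ofPS_coeff_neg p m hm, zero_sub, neg_mem_iff, ← hker, ← hfbar]
      exact HahnSeries.coeff_eq_zero_of_lt_order (by omega)
    · obtain ⟨j, rfl⟩ := Int.eq_ofNat_of_zero_le hm
      have h2 : P.coeff (j : ℤ) = f.coeff (n + j) := by
        simp only [P]
        rw [HahnSeries.ofPowerSeries_apply_coeff, PowerSeries.coeff_mk]
      rw [h2, add_comm, sub_self]
      exact zero_mem _
  have hRk : R ^ k = 0 := by
    ext m
    have := coeff_pow_mem _ R hR k m
    rw [hk] at this
    simpa using this
  have hNk : (Q * R) ^ k = 0 := by rw [mul_pow, hRk, mul_zero]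
  obtain ⟨w, hw, hw0⟩ := logRes_nilp (Q * R) k hNk
  have hf : f = Z * (P * (1 - Q * R)) := by
    have : P * (1 - Q * R) = Y * f := by
      linear_combination (-R) * hPQ
    rw [this, ← mul_assoc, hZY, one_mul]
  have hg : g = Y * (Q * w) := by
    have h1 : f * (Y * (Q * w)) = 1 := by
      rw [hf]
      linear_combination (P * Q * (1 - Q * R) * w) * hZY + ((1 - Q * R) * w) * hPQ + hw
    calc g = g * (f * (Y * (Q * w))) := by rw [h1, mul_one]
      _ = (f * g) * (Y * (Q * w)) := by ring
      _ = _ := by rw [hfg, one_mul]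
  have key : eulerOp f * g
      = eulerOp Z * Y + eulerOp P * Q + eulerOp (1 - Q * R) * w := by
    rw [hg, hf, eulerOp_mul, eulerOp_mul]
    generalize eulerOp (1 - Q * R) = E at *
    generalize 1 - Q * R = U at *
    generalize eulerOp P = EP
    generalize eulerOp Z = EZ
    linear_combination (EZ * Y * U * w) * hPQ + (EZ * Y) * hw
      + (EP * Q * U * w + P * Q * E * w) * hZY + (EP * Q) * hw + (E * w) * hPQ
  have hZ : (eulerOp Z * Y).coeff 0 = n • (1 : A) := by
    rw [HahnSeries.coeff_mul_single, mul_one, eulerOp_coeff]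
    simp [Z]
  rw [key, HahnSeries.coeff_add, HahnSeries.coeff_add, hZ, hw0,
    logRes_pow P Q (ofPS_coeff_neg p) (ofPS_coeff_neg q), add_zero, add_zero]
end
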